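/- Let G be a graph, let D ⊆ V(G), and let ω, β1, β2, β3, β4 be positive reals satisfying ω ≥ β4 ≥ β3 ≥ β2 ≥ β1 > 0, 4ω + β2 ≥ 1, 7ω + β2 ≥ 2, and 10ω + β2 ≥ 3. Suppose in the isolation residual graph G_D^ι every connected component of the subgraph induced by the white vertices is isomorphic to K_2 or to the 5-cycle C_5. If some blue vertex has neighbors in at least two distinct such components, then there exists a D-desirable set of size at most 3. -/

import Mathlib

open Classical

/-- The closed neighborhood `N[D]` of a set `D` of vertices. -/
def closedNbhd {V : Type*} (G : SimpleGraph V) (D : Set V) : Set V :=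
  {v | v ∈ D ∨ ∃ u ∈ D, G.Adj u v}

/-- `S` is an isolating set of `G`: deleting `N[S]` leaves no edge. -/
def IsIsolatingSet {V : Type*} (G : SimpleGraph V) (S : Set V) : Prop :=
  ∀ u v : V, G.Adj u v → u ∈ closedNbhd G S ∨ v ∈ closedNbhd G S

/-- The isolation number: the minimum cardinality of an isolating set. -/
noncomputable def isolationNumber {V : Type*} [Fintype V] (G : SimpleGraph V) : ℕ :=
  sInf {k | ∃ S : Set V, IsIsolatingSet G S ∧ S.ncard = k}

/-- A vertex is white (w.r.t. `D`) if it lies outside `N[D]` and has a neighbor outside `N[D]`. -/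
def IsWhite {V : Type*} (G : SimpleGraph V) (D : Set V) (v : V) : Prop :=
  v ∉ closedNbhd G D ∧ ∃ u, G.Adj v u ∧ u ∉ closedNbhd G D

/-- A vertex is blue (w.r.t. `D`) if it lies in `N[D]` and has a white neighbor. -/
def IsBlue {V : Type*} (G : SimpleGraph V) (D : Set V) (v : V) : Prop :=
  v ∈ closedNbhd G D ∧ ∃ u, G.Adj v u ∧ IsWhite G D u

/-- The isolation residual graph `G_D^ι`: its edges are the edges of `G` incident
with at least one white vertex. -/
def residualGraph {V : Type*} (G : SimpleGraph V) (D : Set V) : SimpleGraph V where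
  Adj u v := G.Adj u v ∧ (IsWhite G D u ∨ IsWhite G D v)
  symm := ⟨fun u v h => ⟨h.1.symm, h.2.symm⟩⟩
  loopless := ⟨fun v h => G.loopless.irrefl v h.1⟩

/-- The degree of a vertex in the isolation residual graph. -/
noncomputable def resDegree {V : Type*} (G : SimpleGraph V) (D : Set V) (v : V) : ℕ :=
  ((residualGraph G D).neighborSet v).ncard

/-- The number of white neighbors of a vertex. -/
noncomputable def whiteNbhdCount {V : Type*} (G : SimpleGraph V) (D : Set V) (v : V) : ℕ :=
  {u | G.Adj v u ∧ IsWhite G D u}.ncard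

/-- The weight of a vertex in the isolation residual graph. -/
noncomputable def vertexWeight {V : Type*} (G : SimpleGraph V) (D : Set V)
    (ω β1 β2 β3 β4 : ℝ) (v : V) : ℝ :=
  if IsWhite G D v then ω
  else if IsBlue G D v then
    if 4 ≤ resDegree G D v then β4
    else if resDegree G D v = 3 then β3
    else if resDegree G D v = 2 then β2
    else β1
  else 0

/-- The total weight `w(G_D^ι)` of the isolation residual graph. -/
noncomputable def totalWeight {V : Type*} [Fintype V] (G : SimpleGraph V) (D : Set V)
    (ω β1 β2 β3 β4 : ℝ) : ℝ :=
  ∑ v : V, vertexWeight G D ω β1 β2 β3 β4 v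

/-- `A ⊆ V(G) \ D` is `D`-desirable if the weight decrease from `D` to `D ∪ A`
is at least `|A|`. -/
def Desirable {V : Type*} [Fintype V] (G : SimpleGraph V) (ω β1 β2 β3 β4 : ℝ)
    (D A : Set V) : Prop :=
  A ⊆ Dᶜ ∧
    (A.ncard : ℝ) ≤ totalWeight G D ω β1 β2 β3 β4 - totalWeight G (D ∪ A) ω β1 β2 β3 β4

/-- `G` is alluring w.r.t. the weights if for every `D` that is not an isolating set
there exists a `D`-desirable set. -/
def Alluring {V : Type*} [Fintype V] (G : SimpleGraph V) (ω β1 β2 β3 β4 : ℝ) : Prop :=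
  ∀ D : Set V, ¬ IsIsolatingSet G D → ∃ A : Set V, Desirable G ω β1 β2 β3 β4 D A

/-- `C` is the vertex set of a connected component of the subgraph of `G_D^ι`
induced by the white vertices. -/
def IsWhiteComponent {V : Type*} (G : SimpleGraph V) (D : Set V) (C : Set V) : Prop :=
  C ⊆ {v | IsWhite G D v} ∧ (G.induce C).Connected ∧
    ∀ u ∈ C, ∀ v : V, IsWhite G D v → G.Adj u v → v ∈ C

/-!
Let `x` be the blue vertex, adjacent to `y₁ ∈ C₁` and `y₂ ∈ C₂`. Adding `x` to `D` dominates both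
`yᵢ`. If `Cᵢ` is a `K₂`, no edge of `Cᵢ` survives; if `Cᵢ` is a `5`-cycle, a single further vertex
at distance two from `yᵢ` dominates an endpoint of every remaining edge. With `b ≤ 2` further
vertices all of `C₁ ∪ C₂ ∪ {x}` turns red. No weight ever increases, each `Cᵢ` spending `bᵢ` further
vertices has `3 bᵢ + 2` white vertices, and `x` has residual degree at least two, so the total drop
is at least `(3 b + 4) ω + β₂ ≥ 1 + b`.
-/

section Isolation

variable {V W : Type*} {G : SimpleGraph V} {D D' C : Set V} {x y : V}

theorem closedNbhd_mono (h : D ⊆ D') : closedNbhd G D ⊆ closedNbhd G D' := by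
  rintro v (hv | ⟨u, hu, huv⟩)
  · exact Or.inl (h hv)
  · exact Or.inr ⟨u, h hu, huv⟩

/-- Every edge of `G` with both endpoints in `U` has an endpoint in `N[S]`. Unlike in
`IsIsolatingSet (G.induce U)`, the set `S` need not be contained in `U`. -/
def IsolatesOn (G : SimpleGraph V) (S U : Set V) : Prop :=
  ∀ u ∈ U, ∀ v ∈ U, G.Adj u v → u ∈ closedNbhd G S ∨ v ∈ closedNbhd G S

theorem IsolatesOn.mono {S S' U : Set V} (hS : IsolatesOn G S U) (h : S ⊆ S') :
    IsolatesOn G S' U := fun u hu v hv huv =>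
  (hS u hu v hv huv).imp (closedNbhd_mono h ·) (closedNbhd_mono h ·)

theorem isolatesOn_of_subsingleton {U : Set V} (hU : U.Subsingleton) (S : Set V) :
    IsolatesOn G S U :=
  fun _ hu _ hv huv => absurd (hU hu hv) huv.ne

theorem isolatesOn_cycleGraph_five (w : Fin 5) :
    IsolatesOn (SimpleGraph.cycleGraph 5) {w + 2} {w}ᶜ := by
  simp only [IsolatesOn, closedNbhd, Set.mem_ofPred_eq, Set.mem_singleton_iff, exists_eq_left,
    Set.mem_compl_iff, SimpleGraph.cycleGraph_adj]
  revert w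
  decide

theorem mem_closedNbhd_image_of_iso {H : SimpleGraph W} (e : G.induce C ≃g H) {T : Set W} {v : C}
    (hv : e v ∈ closedNbhd H T) : (v : V) ∈ closedNbhd G ((fun t => (e.symm t : V)) '' T) := by
  rcases hv with hv | ⟨t, ht, htv⟩
  · exact Or.inl ⟨e v, hv, by simp⟩
  · refine Or.inr ⟨e.symm t, ⟨t, ht, rfl⟩, ?_⟩
    have hadj : (G.induce C).Adj (e.symm t) v :=
      e.map_adj_iff.1 ((e.apply_symm_apply t).symm ▸ htv)
    exact hadj

theorem IsolatesOn.insert_image_of_iso {H : SimpleGraph W} (e : G.induce C ≃g H) {y : C}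
    (hxy : G.Adj x y) {T : Set W} (hT : IsolatesOn H T {e y}ᶜ) :
    IsolatesOn G (insert x ((fun t => (e.symm t : V)) '' T)) C := by
  intro u hu v hv huv
  have hy : (y : V) ∈ closedNbhd G (insert x ((fun t => (e.symm t : V)) '' T)) :=
    Or.inr ⟨x, Set.mem_insert _ _, hxy⟩
  by_cases huy : u = y
  · exact Or.inl (huy ▸ hy)
  by_cases hvy : v = y
  · exact Or.inr (hvy ▸ hy)
  have ne {w : C} (hw : (w : V) ≠ y) : e w ∈ ({e y}ᶜ : Set W) :=
    e.injective.ne (Subtype.coe_ne_coe.1 hw)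
  have lift {w : C} (hw : e w ∈ closedNbhd H T) :=
    closedNbhd_mono (Set.subset_insert x _) (mem_closedNbhd_image_of_iso e hw)
  exact (hT (e ⟨u, hu⟩) (ne huy) (e ⟨v, hv⟩) (ne hvy) (e.map_adj_iff.2 huv)).imp lift lift

/-- The shapes allowed for a white component: `H` is a `K₂` or a `C₅`. -/
def IsK2OrC5 (H : SimpleGraph W) : Prop :=
  Nonempty (H ≃g (⊤ : SimpleGraph (Fin 2))) ∨ Nonempty (H ≃g SimpleGraph.cycleGraph 5)

theorem IsK2OrC5.exists_isolatesOn_insert (hC : IsK2OrC5 (G.induce C)) (hy : y ∈ C)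
    (hxy : G.Adj x y) :
    ∃ B ⊆ C, IsolatesOn G (insert x B) C ∧ B.ncard ≤ 1 ∧ C.ncard = 3 * B.ncard + 2 := by
  rcases hC with ⟨⟨e⟩⟩ | ⟨⟨e⟩⟩
  · have hcard : C.ncard = 2 := by
      rw [← Nat.card_coe_set_eq, Nat.card_congr e.toEquiv, Nat.card_fin]
    have hsub : ({e ⟨y, hy⟩}ᶜ : Set (Fin 2)).Subsingleton := by
      intro a ha b hb
      simp only [Set.mem_compl_iff, Set.mem_singleton_iff] at ha hb
      omega
    have hB := IsolatesOn.insert_image_of_iso e hxy (isolatesOn_of_subsingleton hsub ∅)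
    rw [Set.image_empty] at hB
    exact ⟨∅, Set.empty_subset C, hB, by simp, by simp [hcard]⟩
  · have hcard : C.ncard = 5 := by
      rw [← Nat.card_coe_set_eq, Nat.card_congr e.toEquiv, Nat.card_fin]
    have hB := IsolatesOn.insert_image_of_iso e hxy (isolatesOn_cycleGraph_five (e ⟨y, hy⟩))
    rw [Set.image_singleton] at hB
    exact ⟨_, Set.singleton_subset_iff.2 (Subtype.property _), hB, by simp, by simp [hcard]⟩

end Isolation

section Colors

variable {V : Type*} {G : SimpleGraph V} {D D' C C₁ C₂ : Set V} {u v x y₁ y₂ : V}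

theorem IsWhite.anti (h : D ⊆ D') (hv : IsWhite G D' v) : IsWhite G D v := by
  obtain ⟨hvD, u, hvu, huD⟩ := hv
  exact ⟨fun hv => hvD (closedNbhd_mono h hv), u, hvu, fun hu => huD (closedNbhd_mono h hu)⟩

theorem IsWhite.notMem (hv : IsWhite G D v) : v ∉ D := fun hvD => hv.1 (Or.inl hvD)

theorem IsBlue.not_isWhite (hv : IsBlue G D v) : ¬ IsWhite G D v := fun hw => hw.1 hv.1

theorem not_isBlue_of_mem (hv : v ∈ D) : ¬ IsBlue G D v :=
  fun ⟨_, _, hvu, hu⟩ => hu.1 (Or.inr ⟨v, hv, hvu⟩)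

theorem isWhite_or_isBlue_of_adj (hu : IsWhite G D u) (hvu : G.Adj v u) :
    IsWhite G D v ∨ IsBlue G D v := by
  by_cases hv : v ∈ closedNbhd G D
  · exact Or.inr ⟨hv, u, hvu, hu⟩
  · exact Or.inl ⟨hv, u, hvu, hu.1⟩

theorem IsBlue.isWhite_or_isBlue_of_subset (h : D ⊆ D') (hv : IsBlue G D' v) :
    IsWhite G D v ∨ IsBlue G D v :=
  let ⟨_, _, hvu, hu⟩ := hv
  isWhite_or_isBlue_of_adj (hu.anti h) hvu

namespace IsWhiteComponent

theorem subset_of_mem (h₁ : IsWhiteComponent G D C₁) (h₂ : IsWhiteComponent G D C₂)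
    (hu₁ : u ∈ C₁) (hu₂ : u ∈ C₂) : C₁ ⊆ C₂ := by
  intro v hv
  by_contra hv₂
  obtain ⟨p⟩ := h₁.2.1.preconnected ⟨u, hu₁⟩ ⟨v, hv⟩
  obtain ⟨d, -, hfst, hsnd⟩ := p.exists_boundary_dart (Subtype.val ⁻¹' C₂) hu₂ hv₂
  exact hsnd (h₂.2.2 _ hfst _ (h₁.1 d.snd.2) d.adj)

theorem disjoint (h₁ : IsWhiteComponent G D C₁) (h₂ : IsWhiteComponent G D C₂) (hne : C₁ ≠ C₂) :
    Disjoint C₁ C₂ :=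
  Set.disjoint_left.2 fun _ hu₁ hu₂ =>
    hne ((h₁.subset_of_mem h₂ hu₁ hu₂).antisymm (h₂.subset_of_mem h₁ hu₂ hu₁))

theorem isBlue_of_adj_of_adj (h₁ : IsWhiteComponent G D C₁) (h₂ : IsWhiteComponent G D C₂)
    (hne : C₁ ≠ C₂) (hy₁ : y₁ ∈ C₁) (hxy₁ : G.Adj x y₁) (hy₂ : y₂ ∈ C₂) (hxy₂ : G.Adj x y₂) :
    IsBlue G D x := by
  refine (isWhite_or_isBlue_of_adj (h₁.1 hy₁) hxy₁).resolve_left fun hx => ?_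
  exact Set.disjoint_left.1 (h₁.disjoint h₂ hne) (h₁.2.2 y₁ hy₁ x hx hxy₁.symm)
    (h₂.2.2 y₂ hy₂ x hx hxy₂.symm)

theorem not_isWhite_of_isolatesOn (hC : IsWhiteComponent G D C) (h : D ⊆ D')
    (hiso : IsolatesOn G D' C) (hv : v ∈ C) : ¬ IsWhite G D' v := by
  rintro ⟨hvD, u, hvu, huD⟩
  have hu : IsWhite G D' u := ⟨huD, v, hvu.symm, hvD⟩
  exact (hiso v hv u (hC.2.2 v hv u (hu.anti h) hvu) hvu).elim hvD huD

theorem not_isBlue_of_isolatesOn (hC : IsWhiteComponent G D C) (h : D ⊆ D')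
    (hiso : IsolatesOn G D' C) (hv : v ∈ C) : ¬ IsBlue G D' v := by
  rintro ⟨-, u, hvu, hu⟩
  exact hC.not_isWhite_of_isolatesOn h hiso (hC.2.2 v hv u (hu.anti h) hvu) hu

end IsWhiteComponent

theorem resDegree_anti [Finite V] (G : SimpleGraph V) (v : V) (h : D ⊆ D') :
    resDegree G D' v ≤ resDegree G D v :=
  Set.ncard_le_ncard fun _ ⟨hvu, hw⟩ => ⟨hvu, hw.imp (·.anti h) (·.anti h)⟩

theorem two_le_resDegree [Finite V] (hne : y₁ ≠ y₂) (hy₁ : IsWhite G D y₁) (hxy₁ : G.Adj x y₁)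
    (hy₂ : IsWhite G D y₂) (hxy₂ : G.Adj x y₂) : 2 ≤ resDegree G D x := by
  rw [← Set.ncard_pair hne]
  refine Set.ncard_le_ncard (Set.pair_subset ?_ ?_)
  · exact ⟨hxy₁, Or.inr hy₁⟩
  · exact ⟨hxy₂, Or.inr hy₂⟩

end Colors

section Weights

variable {V : Type*} {G : SimpleGraph V} {D D' C : Set V} {v : V} {ω β1 β2 β3 β4 : ℝ}

/-- The weight of a blue vertex as a function of its residual degree `d`. As in `vertexWeight`, the
value at `d = 0`, which no blue vertex attains, is `β1`. -/
noncomputable def blueWeight (β1 β2 β3 β4 : ℝ) (d : ℕ) : ℝ :=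
  if 4 ≤ d then β4 else if d = 3 then β3 else if d = 2 then β2 else β1

theorem blueWeight_mono (h12 : β1 ≤ β2) (h23 : β2 ≤ β3) (h34 : β3 ≤ β4) :
    Monotone (blueWeight β1 β2 β3 β4) := by
  intro c d hcd
  unfold blueWeight
  split_ifs <;> first | linarith | omega

/-- The standing assumption on the weights: nonnegative, increasing with the residual degree for
blue vertices, and largest for white vertices. -/
structure MonotoneWeights (ω β1 β2 β3 β4 : ℝ) : Prop where
  nonneg : 0 ≤ β1
  le12 : β1 ≤ β2
  le23 : β2 ≤ β3
  le34 : β3 ≤ β4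
  le_white : β4 ≤ ω

namespace MonotoneWeights

theorem monotone_blueWeight (hw : MonotoneWeights ω β1 β2 β3 β4) :
    Monotone (blueWeight β1 β2 β3 β4) :=
  blueWeight_mono hw.le12 hw.le23 hw.le34

theorem blueWeight_nonneg (hw : MonotoneWeights ω β1 β2 β3 β4) (d : ℕ) :
    0 ≤ blueWeight β1 β2 β3 β4 d :=
  hw.nonneg.trans (hw.monotone_blueWeight d.zero_le)

theorem blueWeight_le_white (hw : MonotoneWeights ω β1 β2 β3 β4) (d : ℕ) :
    blueWeight β1 β2 β3 β4 d ≤ ω :=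
  calc blueWeight β1 β2 β3 β4 d
    _ ≤ blueWeight β1 β2 β3 β4 (max 4 d) := hw.monotone_blueWeight (le_max_right 4 d)
    _ = β4 := if_pos (le_max_left 4 d)
    _ ≤ ω := hw.le_white

theorem white_nonneg (hw : MonotoneWeights ω β1 β2 β3 β4) : 0 ≤ ω :=
  (hw.blueWeight_nonneg 0).trans (hw.blueWeight_le_white 0)

end MonotoneWeights

theorem vertexWeight_of_isWhite (hv : IsWhite G D v) : vertexWeight G D ω β1 β2 β3 β4 v = ω :=
  if_pos hv

theorem vertexWeight_of_isBlue (hv : IsBlue G D v) :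
    vertexWeight G D ω β1 β2 β3 β4 v = blueWeight β1 β2 β3 β4 (resDegree G D v) :=
  (if_neg hv.not_isWhite).trans (if_pos hv)

theorem vertexWeight_of_not_isWhite_of_not_isBlue (hvw : ¬ IsWhite G D v) (hvb : ¬ IsBlue G D v) :
    vertexWeight G D ω β1 β2 β3 β4 v = 0 :=
  (if_neg hvw).trans (if_neg hvb)

theorem vertexWeight_of_mem (hv : v ∈ D) : vertexWeight G D ω β1 β2 β3 β4 v = 0 :=
  vertexWeight_of_not_isWhite_of_not_isBlue (fun hvw => hvw.notMem hv) (not_isBlue_of_mem hv)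

theorem IsWhiteComponent.vertexWeight_eq_zero (hC : IsWhiteComponent G D C) (h : D ⊆ D')
    (hiso : IsolatesOn G D' C) (hv : v ∈ C) : vertexWeight G D' ω β1 β2 β3 β4 v = 0 :=
  vertexWeight_of_not_isWhite_of_not_isBlue (hC.not_isWhite_of_isolatesOn h hiso hv)
    (hC.not_isBlue_of_isolatesOn h hiso hv)

namespace MonotoneWeights

theorem vertexWeight_nonneg (hw : MonotoneWeights ω β1 β2 β3 β4) (G : SimpleGraph V) (D : Set V)
    (v : V) : 0 ≤ vertexWeight G D ω β1 β2 β3 β4 v := by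
  by_cases hvw : IsWhite G D v
  · exact hw.white_nonneg.trans_eq (vertexWeight_of_isWhite hvw).symm
  by_cases hvb : IsBlue G D v
  · exact (hw.blueWeight_nonneg _).trans_eq (vertexWeight_of_isBlue hvb).symm
  · exact (vertexWeight_of_not_isWhite_of_not_isBlue hvw hvb).ge

theorem vertexWeight_le_white (hw : MonotoneWeights ω β1 β2 β3 β4) (G : SimpleGraph V) (D : Set V)
    (v : V) : vertexWeight G D ω β1 β2 β3 β4 v ≤ ω := by
  by_cases hvw : IsWhite G D v
  · exact (vertexWeight_of_isWhite hvw).le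
  by_cases hvb : IsBlue G D v
  · exact (vertexWeight_of_isBlue hvb).trans_le (hw.blueWeight_le_white _)
  · exact (vertexWeight_of_not_isWhite_of_not_isBlue hvw hvb).trans_le hw.white_nonneg

theorem vertexWeight_anti [Finite V] (hw : MonotoneWeights ω β1 β2 β3 β4) (G : SimpleGraph V)
    (v : V) (h : D ⊆ D') :
    vertexWeight G D' ω β1 β2 β3 β4 v ≤ vertexWeight G D ω β1 β2 β3 β4 v := by
  by_cases hvw : IsWhite G D v
  · exact (hw.vertexWeight_le_white G D' v).trans_eq (vertexWeight_of_isWhite hvw).symm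
  have hvw' : ¬ IsWhite G D' v := mt (IsWhite.anti h) hvw
  by_cases hvb' : IsBlue G D' v
  · have hvb : IsBlue G D v := (hvb'.isWhite_or_isBlue_of_subset h).resolve_left hvw
    rw [vertexWeight_of_isBlue hvb, vertexWeight_of_isBlue hvb']
    exact hw.monotone_blueWeight (resDegree_anti G v h)
  · rw [vertexWeight_of_not_isWhite_of_not_isBlue hvw' hvb']
    exact hw.vertexWeight_nonneg G D v

theorem le_vertexWeight_of_two_le_resDegree (hw : MonotoneWeights ω β1 β2 β3 β4)
    (hv : IsBlue G D v) (hdeg : 2 ≤ resDegree G D v) :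
    β2 ≤ vertexWeight G D ω β1 β2 β3 β4 v :=
  calc β2 = blueWeight β1 β2 β3 β4 2 := by simp [blueWeight]
    _ ≤ blueWeight β1 β2 β3 β4 (resDegree G D v) := hw.monotone_blueWeight hdeg
    _ = vertexWeight G D ω β1 β2 β3 β4 v := (vertexWeight_of_isBlue hv).symm

theorem sum_vertexWeight_le_totalWeight_sub [Fintype V] (hw : MonotoneWeights ω β1 β2 β3 β4)
    (h : D ⊆ D') {S : Finset V} (hS : ∀ v ∈ S, vertexWeight G D' ω β1 β2 β3 β4 v = 0) :
    ∑ v ∈ S, vertexWeight G D ω β1 β2 β3 β4 v ≤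
      totalWeight G D ω β1 β2 β3 β4 - totalWeight G D' ω β1 β2 β3 β4 := by
  rw [totalWeight, totalWeight, ← Finset.sum_sub_distrib]
  calc ∑ v ∈ S, vertexWeight G D ω β1 β2 β3 β4 v
    _ = ∑ v ∈ S, (vertexWeight G D ω β1 β2 β3 β4 v - vertexWeight G D' ω β1 β2 β3 β4 v) :=
      Finset.sum_congr rfl fun v hv => by rw [hS v hv, sub_zero]
    _ ≤ _ := Finset.sum_le_sum_of_subset_of_nonneg (Finset.subset_univ S) fun v _ _ =>
      sub_nonneg.2 (hw.vertexWeight_anti G v h)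

end MonotoneWeights

theorem sum_vertexWeight_of_isWhite [Fintype V] (hC : ∀ v ∈ C, IsWhite G D v) :
    ∑ v ∈ C.toFinset, vertexWeight G D ω β1 β2 β3 β4 v = C.ncard * ω := by
  rw [Finset.sum_congr rfl fun v hv => vertexWeight_of_isWhite (hC v (Set.mem_toFinset.1 hv)),
    Finset.sum_const, nsmul_eq_mul, Set.ncard_eq_toFinset_card']

end Weights

section TwoComponents

variable {V : Type*} [Fintype V] {G : SimpleGraph V} {D D' C₁ C₂ : Set V} {x y₁ y₂ : V}
  {ω β1 β2 β3 β4 : ℝ}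

theorem MonotoneWeights.le_totalWeight_sub_of_isolatesOn (hw : MonotoneWeights ω β1 β2 β3 β4)
    (hC₁ : IsWhiteComponent G D C₁) (hC₂ : IsWhiteComponent G D C₂) (hne : C₁ ≠ C₂)
    (hy₁ : y₁ ∈ C₁) (hxy₁ : G.Adj x y₁) (hy₂ : y₂ ∈ C₂) (hxy₂ : G.Adj x y₂)
    (h : D ⊆ D') (hx : x ∈ D') (hiso₁ : IsolatesOn G D' C₁) (hiso₂ : IsolatesOn G D' C₂) :
    (C₁.ncard + C₂.ncard) * ω + β2 ≤
      totalWeight G D ω β1 β2 β3 β4 - totalWeight G D' ω β1 β2 β3 β4 := by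
  have hdisj : Disjoint C₁ C₂ := hC₁.disjoint hC₂ hne
  have hblue : IsBlue G D x := hC₁.isBlue_of_adj_of_adj hC₂ hne hy₁ hxy₁ hy₂ hxy₂
  have hweight : β2 ≤ vertexWeight G D ω β1 β2 β3 β4 x :=
    hw.le_vertexWeight_of_two_le_resDegree hblue <|
      two_le_resDegree (hdisj.ne_of_mem hy₁ hy₂) (hC₁.1 hy₁) hxy₁ (hC₂.1 hy₂) hxy₂
  have hxC : x ∉ C₁.toFinset ∪ C₂.toFinset := by
    rw [Finset.mem_union, Set.mem_toFinset, Set.mem_toFinset]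
    exact fun hxC => hblue.not_isWhite (hxC.elim (hC₁.1 ·) (hC₂.1 ·))
  have hzero : ∀ v ∈ insert x (C₁.toFinset ∪ C₂.toFinset),
      vertexWeight G D' ω β1 β2 β3 β4 v = 0 := by
    simp only [Finset.mem_insert, Finset.mem_union, Set.mem_toFinset]
    rintro v (rfl | hv | hv)
    · exact vertexWeight_of_mem hx
    · exact hC₁.vertexWeight_eq_zero h hiso₁ hv
    · exact hC₂.vertexWeight_eq_zero h hiso₂ hv
  have hdrop := hw.sum_vertexWeight_le_totalWeight_sub h hzero
  rw [Finset.sum_insert hxC, Finset.sum_union (Set.disjoint_toFinset.2 hdisj),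
    sum_vertexWeight_of_isWhite hC₁.1, sum_vertexWeight_of_isWhite hC₂.1] at hdrop
  linarith

theorem exists_desirable_of_blue_two_components_general (hw : MonotoneWeights ω β1 β2 β3 β4)
    (hc4a : 4 * ω + β2 ≥ 1) (hc4b : 7 * ω + β2 ≥ 2) (hc4c : 10 * ω + β2 ≥ 3)
    (hC₁ : IsWhiteComponent G D C₁) (hC₂ : IsWhiteComponent G D C₂) (hne : C₁ ≠ C₂)
    (hshape₁ : IsK2OrC5 (G.induce C₁)) (hshape₂ : IsK2OrC5 (G.induce C₂))
    (hy₁ : y₁ ∈ C₁) (hxy₁ : G.Adj x y₁) (hy₂ : y₂ ∈ C₂) (hxy₂ : G.Adj x y₂) :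
    ∃ A : Set V, Desirable G ω β1 β2 β3 β4 D A ∧ A.ncard ≤ 3 := by
  obtain ⟨B₁, hB₁, hiso₁, hb₁, hcard₁⟩ := hshape₁.exists_isolatesOn_insert hy₁ hxy₁
  obtain ⟨B₂, hB₂, hiso₂, hb₂, hcard₂⟩ := hshape₂.exists_isolatesOn_insert hy₂ hxy₂
  have hblue : IsBlue G D x := hC₁.isBlue_of_adj_of_adj hC₂ hne hy₁ hxy₁ hy₂ hxy₂
  have hcard : (insert x (B₁ ∪ B₂)).ncard ≤ B₁.ncard + B₂.ncard + 1 :=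
    (Set.ncard_insert_le _ _).trans (Nat.add_le_add_right (Set.ncard_union_le _ _) 1)
  have hdrop := hw.le_totalWeight_sub_of_isolatesOn hC₁ hC₂ hne hy₁ hxy₁ hy₂ hxy₂
    (D' := D ∪ insert x (B₁ ∪ B₂)) Set.subset_union_left (by simp)
    (hiso₁.mono (by grind)) (hiso₂.mono (by grind))
  refine ⟨insert x (B₁ ∪ B₂), ⟨?_, le_trans ?_ hdrop⟩, by omega⟩
  · rintro v (rfl | hv | hv)
    · exact fun hvD => not_isBlue_of_mem hvD hblue
    · exact (hC₁.1 (hB₁ hv)).notMem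
    · exact (hC₂.1 (hB₂ hv)).notMem
  · rw [hcard₁, hcard₂]
    refine (Nat.cast_le.2 hcard).trans ?_
    interval_cases B₁.ncard <;> interval_cases B₂.ncard <;> norm_num <;> linarith

end TwoComponents

/-- Claim 4: if every white component is `K₂` or `C₅` and some blue vertex has
neighbors in two distinct white components, then there is a `D`-desirable set
of size at most 3. -/
theorem exists_desirable_of_blue_two_components {V : Type*} [Fintype V]
    (G : SimpleGraph V) (D : Set V) (ω β1 β2 β3 β4 : ℝ)
    (hm1 : ω ≥ β4) (hm2 : β4 ≥ β3) (hm3 : β3 ≥ β2) (hm4 : β2 ≥ β1) (hm5 : β1 > 0)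
    (hc4a : 4 * ω + β2 ≥ 1) (hc4b : 7 * ω + β2 ≥ 2) (hc4c : 10 * ω + β2 ≥ 3)
    (hcomp : ∀ C : Set V, IsWhiteComponent G D C →
      Nonempty (G.induce C ≃g (⊤ : SimpleGraph (Fin 2))) ∨
      Nonempty (G.induce C ≃g SimpleGraph.cycleGraph 5))
    (h : ∃ x, IsBlue G D x ∧ ∃ C₁ C₂ : Set V,
      IsWhiteComponent G D C₁ ∧ IsWhiteComponent G D C₂ ∧ C₁ ≠ C₂ ∧
      (∃ y₁ ∈ C₁, (residualGraph G D).Adj x y₁) ∧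
      (∃ y₂ ∈ C₂, (residualGraph G D).Adj x y₂)) :
    ∃ A : Set V, Desirable G ω β1 β2 β3 β4 D A ∧ A.ncard ≤ 3 := by
  obtain ⟨x, -, C₁, C₂, hC₁, hC₂, hne, ⟨y₁, hy₁, hxy₁, -⟩, ⟨y₂, hy₂, hxy₂, -⟩⟩ := h
  exact exists_desirable_of_blue_two_components_general ⟨hm5.le, hm4, hm3, hm2, hm1⟩
    hc4a hc4b hc4c hC₁ hC₂ hne (hcomp C₁ hC₁) (hcomp C₂ hC₂) hy₁ hxy₁ hy₂ hxy₂
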